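/- arXiv:2006.08395 — 2 statements merged into one kernel-verified Lean document; each statement's English description precedes it below -/
import Mathlib

section
/- For every natural number m, the differential equation F(Z,Y,X) = X·Z + m·Y is logarithm-like solvable. Precisely: fix x₀ ∈ ℂ with x₀ ≠ 0, let F₁ = (X+1)·Z + m·Y and F_{x₀} = (X+x₀)·Z + m·Y in ℂ[Z,Y,X], let f₁ ∈ ℂ[X], and define f̃ ∈ ℂ[X] by f̃(X) = f₁(x₀⁻¹·X). Then H_{F_{x₀},f̃}(X,A) = H_{F₁,f₁}(x₀⁻¹·X, x₀⁻¹·A); consequently, if f₁ is a hyper Taylor approximation of F₁ with H_{F₁,f₁} = r·X^n + A·G (n ≥ 1, degree of G in X smaller than n), then f̃ is a hyper Taylor approximation of F_{x₀} with H_{F_{x₀},f̃} = (r/x₀^n)·X^n + A·G̃ where G̃(X,A) = x₀⁻¹·G(x₀⁻¹·X, x₀⁻¹·A) has degree in X smaller than n. -/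
open MvPolynomial Hyperreal

/-- The ring hom embedding `ℝ` into the hyperreals `ℝ*`. -/
noncomputable def realToHyper : ℝ →+* ℝ* where
  toFun r := (r : ℝ*)
  map_one' := Hyperreal.coe_one
  map_mul' := Hyperreal.coe_mul
  map_zero' := Hyperreal.coe_zero
  map_add' := Hyperreal.coe_add

/-- `f(X+A)` as an element of `K[X,A]` (variable `0` is `X`, variable `1` is `A`). -/
noncomputable def shiftPoly {K : Type*} [CommSemiring K] (f : Polynomial K) :
    MvPolynomial (Fin 2) K :=
  Polynomial.aeval (MvPolynomial.X 0 + MvPolynomial.X 1) f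

/-- `f(X)` as an element of `K[X,A]` (variable `0` is `X`, variable `1` is `A`). -/
noncomputable def injPoly {K : Type*} [CommSemiring K] (f : Polynomial K) :
    MvPolynomial (Fin 2) K :=
  Polynomial.aeval (MvPolynomial.X 0) f

/-- `Q` is the difference-quotient polynomial of `f`, i.e. `A·Q = f(X+A) − f(X)` in `K[X,A]`. -/
def IsDiffQuot {K : Type*} [CommRing K] (f : Polynomial K) (Q : MvPolynomial (Fin 2) K) : Prop :=
  MvPolynomial.X 1 * Q = shiftPoly f - injPoly f

/-- The associated polynomial `H_{F,f} ∈ K[X,A]` of `F ∈ K[Z,Y,X]` (variables `Z = 0`, `Y = 1`,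
`X = 2`) and `f ∈ K[X]`, given the difference-quotient polynomial `Q` of `f`:
substitute `Z := Q`, `Y := f(X)`, `X := X`. -/
noncomputable def Hpoly {K : Type*} [CommRing K] (F : MvPolynomial (Fin 3) K) (f : Polynomial K)
    (Q : MvPolynomial (Fin 2) K) : MvPolynomial (Fin 2) K :=
  MvPolynomial.aeval ![Q, injPoly f, MvPolynomial.X 0] F

/-- The algebra map `K[X,A] → K[X,A]` substituting `X ↦ c·X`, `A ↦ c·A`. -/
noncomputable def scaleVars {K : Type*} [CommSemiring K] (c : K) :
    MvPolynomial (Fin 2) K →ₐ[K] MvPolynomial (Fin 2) K :=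
  MvPolynomial.aeval ![MvPolynomial.C c * MvPolynomial.X 0, MvPolynomial.C c * MvPolynomial.X 1]

/-!
Let `c * d = 1`. If `g(x) = f(c·x)` and `t = c·x`, the chain rule gives `g'(x) = c·f'(t)`, so
evaluating `F(Z,Y,X)` along `g` at `x` is evaluating `F(c·Z, Y, d·X)` along `f` at `t`. The same
computation holds for difference quotients: substituting `X ↦ c·X`, `A ↦ c·A` in
`A·Q = f(X+A) - f(X)` shows that `c·Q(c·X, c·A)` is the difference quotient of `f(c·X)`.
For `c = x₀⁻¹` and `d = x₀`, this turns `(X+x₀)·Z + m·Y` into `(X+1)·Z + m·Y`.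
-/

section ScaleVars

variable {K : Type*} [CommSemiring K] (c : K)

theorem scaleVars_X (i : Fin 2) : scaleVars c (X i) = C c * X i := by
  fin_cases i <;> simp [scaleVars]

theorem scaleVars_C (a : K) : scaleVars c (C a) = C a :=
  algHom_C _ a

theorem scaleVars_monomial (e : Fin 2 →₀ ℕ) (a : K) :
    scaleVars c (monomial e a) = monomial e (c ^ e.degree * a) := by
  rw [monomial_eq, monomial_eq, Finsupp.prod_fintype _ _ fun _ ↦ pow_zero _, map_mul, map_prod,
    Finsupp.degree_eq_sum, ← Finset.prod_pow_eq_pow_sum]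
  simp only [map_pow, map_mul, map_prod, scaleVars_X, scaleVars_C, mul_pow,
    Finset.prod_mul_distrib]
  ring

theorem coeff_scaleVars (p : MvPolynomial (Fin 2) K) (e : Fin 2 →₀ ℕ) :
    coeff e (scaleVars c p) = c ^ e.degree * coeff e p := by
  induction p using MvPolynomial.induction_on' with
  | monomial u a =>
    rw [scaleVars_monomial, coeff_monomial, coeff_monomial]
    split_ifs with hue
    · rw [hue]
    · rw [mul_zero]
  | add p q hp hq => rw [map_add, coeff_add, coeff_add, hp, hq, mul_add]

theorem support_scaleVars_subset (p : MvPolynomial (Fin 2) K) :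
    (scaleVars c p).support ⊆ p.support := by
  intro e he
  rw [mem_support_iff, coeff_scaleVars] at he
  exact mem_support_iff.mpr (right_ne_zero_of_mul he)

theorem degreeOf_scaleVars_le (i : Fin 2) (p : MvPolynomial (Fin 2) K) :
    degreeOf i (scaleVars c p) ≤ degreeOf i p :=
  degreeOf_le_iff.mpr fun _ he ↦ monomial_le_degreeOf i (support_scaleVars_subset c p he)

theorem scaleVars_C_mul_X_pow_add_X_mul (r : K) (n : ℕ) (G : MvPolynomial (Fin 2) K) :
    scaleVars c (C r * X 0 ^ n + X 1 * G) =
      C (r * c ^ n) * X 0 ^ n + X 1 * (C c * scaleVars c G) := by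
  simp only [map_add, map_mul, map_pow, scaleVars_X, scaleVars_C]
  ring

theorem scaleVars_injPoly (f : Polynomial K) :
    scaleVars c (injPoly f) = injPoly (f.comp (Polynomial.C c * Polynomial.X)) := by
  simp only [injPoly, Polynomial.aeval_comp, ← Polynomial.aeval_algHom_apply, scaleVars_X,
    map_mul, Polynomial.aeval_C, Polynomial.aeval_X, algebraMap_eq]

theorem scaleVars_shiftPoly (f : Polynomial K) :
    scaleVars c (shiftPoly f) = shiftPoly (f.comp (Polynomial.C c * Polynomial.X)) := by
  simp only [shiftPoly, Polynomial.aeval_comp, ← Polynomial.aeval_algHom_apply, scaleVars_X,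
    map_add, map_mul, mul_add, Polynomial.aeval_C, Polynomial.aeval_X, algebraMap_eq]

end ScaleVars

/-- The substitution `Z ↦ c·Z`, `X ↦ d·X` in a differential equation `F(Z,Y,X)`, with the same
numbering of variables as in `Hpoly`. For `c * d = 1` it expresses the change of variable
`X ↦ d·X`, under which the derivative `Z` picks up the factor `c`. -/
noncomputable def scaleEquation {K : Type*} [CommSemiring K] (c d : K) :
    MvPolynomial (Fin 3) K →ₐ[K] MvPolynomial (Fin 3) K :=
  aeval ![C c * X 0, X 1, C d * X 2]

theorem scaleEquation_log {K : Type*} [CommSemiring K] {c d : K} (hcd : c * d = 1) (a : K) :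
    scaleEquation c d ((X 2 + C d) * X 0 + C a * X 1) = (X 2 + 1) * X 0 + C a * X 1 := by
  calc scaleEquation c d ((X 2 + C d) * X 0 + C a * X 1)
      = (C d * X 2 + C d) * (C c * X 0) + C a * X 1 := by
        simp only [scaleEquation, map_add, map_mul, aeval_X, algHom_C, algebraMap_eq,
          Matrix.cons_val]
    _ = C (c * d) * ((X 2 + 1) * X 0) + C a * X 1 := by rw [C_mul]; ring
    _ = (X 2 + 1) * X 0 + C a * X 1 := by rw [hcd, C_1, one_mul]

section Rescaling

variable {K : Type*} [CommRing K] {f : Polynomial K} {Q Q' : MvPolynomial (Fin 2) K}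

theorem IsDiffQuot.unique (hQ : IsDiffQuot f Q) (hQ' : IsDiffQuot f Q') : Q = Q' :=
  X_mul_cancel_left_iff.mp (hQ.trans hQ'.symm)

theorem IsDiffQuot.comp_C_mul_X (hQ : IsDiffQuot f Q) (c : K) :
    IsDiffQuot (f.comp (Polynomial.C c * Polynomial.X)) (C c * scaleVars c Q) := by
  calc X 1 * (C c * scaleVars c Q)
      = scaleVars c (X 1 * Q) := by rw [map_mul, scaleVars_X]; ring
    _ = scaleVars c (shiftPoly f - injPoly f) := by rw [hQ]
    _ = _ := by rw [map_sub, scaleVars_shiftPoly, scaleVars_injPoly]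

variable {c d : K}

theorem scaleVars_Hpoly_scaleEquation (hcd : c * d = 1) (F : MvPolynomial (Fin 3) K) :
    scaleVars c (Hpoly (scaleEquation c d F) f Q) =
      Hpoly F (f.comp (Polynomial.C c * Polynomial.X)) (C c * scaleVars c Q) := by
  have hX : C d * (C c * X 0) = (X 0 : MvPolynomial (Fin 2) K) := by
    rw [← mul_assoc, ← C_mul, mul_comm d, hcd, C_1, one_mul]
  simp only [Hpoly, scaleEquation, comp_aeval_apply]
  congr 2
  funext i
  fin_cases i <;> simp [scaleVars_X, scaleVars_injPoly, hX]

theorem stmt_6_general (hcd : c * d = 1) (F : MvPolynomial (Fin 3) K) (hQ : IsDiffQuot f Q)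
    (hQ' : IsDiffQuot (f.comp (Polynomial.C c * Polynomial.X)) Q') :
    Hpoly F (f.comp (Polynomial.C c * Polynomial.X)) Q' =
      scaleVars c (Hpoly (scaleEquation c d F) f Q) ∧
    ∀ (r : K) (n : ℕ) (G : MvPolynomial (Fin 2) K), degreeOf 0 G < n →
      Hpoly (scaleEquation c d F) f Q = C r * X 0 ^ n + X 1 * G →
      Hpoly F (f.comp (Polynomial.C c * Polynomial.X)) Q' =
        C (r * c ^ n) * X 0 ^ n + X 1 * (C c * scaleVars c G) ∧
      degreeOf 0 (C c * scaleVars c G) < n := by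
  have hH : Hpoly F (f.comp (Polynomial.C c * Polynomial.X)) Q' =
      scaleVars c (Hpoly (scaleEquation c d F) f Q) := by
    rw [scaleVars_Hpoly_scaleEquation hcd, hQ'.unique (hQ.comp_C_mul_X c)]
  refine ⟨hH, fun r n G hG hTaylor ↦ ⟨?_, ?_⟩⟩
  · rw [hH, hTaylor, scaleVars_C_mul_X_pow_add_X_mul]
  · calc degreeOf 0 (C c * scaleVars c G)
        ≤ degreeOf 0 (scaleVars c G) := degreeOf_C_mul_le _ _ _
      _ ≤ degreeOf 0 G := degreeOf_scaleVars_le c 0 G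
      _ < n := hG

end Rescaling

/-- For every natural number `m`, the differential equation `F = X·Z + m·Y`
is logarithm-like solvable: with `F₁ = (X+1)·Z + m·Y`, `F_{x₀} = (X+x₀)·Z + m·Y` and
`f̃(X) = f₁(x₀⁻¹·X)`, one has `H_{F_{x₀},f̃}(X,A) = H_{F₁,f₁}(x₀⁻¹X, x₀⁻¹A)`; consequently
hyper Taylor approximations of `F₁` rescale to hyper Taylor approximations of `F_{x₀}`. -/
theorem stmt_6 (m : ℕ) (x₀ : ℂ) (hx₀ : x₀ ≠ 0) (f₁ : Polynomial ℂ)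
    (Q₁ Qt : MvPolynomial (Fin 2) ℂ)
    (hQ₁ : IsDiffQuot f₁ Q₁)
    (hQt : IsDiffQuot (f₁.comp (Polynomial.C x₀⁻¹ * Polynomial.X)) Qt) :
    Hpoly ((MvPolynomial.X 2 + MvPolynomial.C x₀) * MvPolynomial.X 0 +
          MvPolynomial.C (m : ℂ) * MvPolynomial.X 1)
        (f₁.comp (Polynomial.C x₀⁻¹ * Polynomial.X)) Qt =
      scaleVars x₀⁻¹ (Hpoly ((MvPolynomial.X 2 + 1) * MvPolynomial.X 0 +
          MvPolynomial.C (m : ℂ) * MvPolynomial.X 1) f₁ Q₁) ∧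
    ∀ (r : ℂ) (n : ℕ) (G : MvPolynomial (Fin 2) ℂ), 1 ≤ n → MvPolynomial.degreeOf 0 G < n →
      Hpoly ((MvPolynomial.X 2 + 1) * MvPolynomial.X 0 +
          MvPolynomial.C (m : ℂ) * MvPolynomial.X 1) f₁ Q₁ =
        MvPolynomial.C r * MvPolynomial.X 0 ^ n + MvPolynomial.X 1 * G →
      Hpoly ((MvPolynomial.X 2 + MvPolynomial.C x₀) * MvPolynomial.X 0 +
            MvPolynomial.C (m : ℂ) * MvPolynomial.X 1)
          (f₁.comp (Polynomial.C x₀⁻¹ * Polynomial.X)) Qt =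
        MvPolynomial.C (r / x₀ ^ n) * MvPolynomial.X 0 ^ n +
          MvPolynomial.X 1 * (MvPolynomial.C x₀⁻¹ * scaleVars x₀⁻¹ G) ∧
      MvPolynomial.degreeOf 0 (MvPolynomial.C x₀⁻¹ * scaleVars x₀⁻¹ G) < n := by
  have h := stmt_6_general (inv_mul_cancel₀ hx₀) ((X 2 + C x₀) * X 0 + C (m : ℂ) * X 1) hQ₁ hQt
  simp only [scaleEquation_log (inv_mul_cancel₀ hx₀), inv_pow, ← div_eq_mul_inv] at h
  exact ⟨h.1, fun r n G _ ↦ h.2 r n G⟩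
end

section
/- Finiteness of the root set T_f(F): let f ∈ ℝ[X] and F ∈ ℝ[Z,Y,X] with H_{F,f} = r·X^n + A·G, where r ≠ 0, n ≥ 1, and the degree of G in X is smaller than n. Then for every nonzero infinitesimal α ∈ ℝ*, the set T = {β ∈ ℝ* : H_{F,f}(β,α) = 0} of hyperreal roots is finite with at most n elements, and every element of T is infinitesimal. -/
open MvPolynomial Hyperreal

/-!
Fix a valuation whose ring of integers contains all coefficients. For `α` in the maximal ideal,
`H(X, α) = r X ^ n + α G(X, α)` has degree `n`, a leading coefficient of valuation one, and lower
coefficients divisible by `α`. At a point `β` of valuation at least one the leading term therefore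
strictly dominates all others, so `β` is not a root. For the hyperreals, the relevant valuation is
the archimedean one, whose maximal ideal consists of the infinitesimals.
-/

section Specialize

variable {R L : Type*} [CommSemiring R] [CommSemiring L] {m : ℕ}

/-- The univariate polynomial `p(X, s₁, …, sₘ)` obtained from `p(X₀, …, Xₘ)` by mapping the
coefficients along `φ` and substituting `s` for all variables but the first, so that its roots can
be studied by univariate methods. -/
noncomputable def specializeTail (φ : R →+* L) (s : Fin m → L) :
    MvPolynomial (Fin (m + 1)) R →+* Polynomial L :=
  (Polynomial.mapRingHom (eval₂Hom φ s)).comp (finSuccEquiv R m : _ →+* _)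

variable (φ : R →+* L) (s : Fin m → L)

lemma specializeTail_apply (p : MvPolynomial (Fin (m + 1)) R) :
    specializeTail φ s p = (finSuccEquiv R m p).map (eval₂Hom φ s) :=
  rfl

@[simp]
lemma specializeTail_C (c : R) : specializeTail φ s (C c) = Polynomial.C (φ c) := by
  simp [specializeTail_apply, finSuccEquiv_apply]

@[simp]
lemma specializeTail_X_zero : specializeTail φ s (X 0) = Polynomial.X := by
  simp [specializeTail_apply, finSuccEquiv_X_zero]

@[simp]
lemma specializeTail_X_succ (i : Fin m) :
    specializeTail φ s (X i.succ) = Polynomial.C (s i) := by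
  simp [specializeTail_apply, finSuccEquiv_X_succ]

lemma eval_specializeTail (p : MvPolynomial (Fin (m + 1)) R) (b : L) :
    (specializeTail φ s p).eval b = eval₂ φ (Matrix.vecCons b s) p := by
  have hom_eq : (Polynomial.evalRingHom b).comp (specializeTail φ s) =
      eval₂Hom φ (Matrix.vecCons b s) :=
    ringHom_ext (by simp) (Fin.cases (by simp) (by simp))
  exact DFunLike.congr_fun hom_eq p

lemma natDegree_specializeTail_le (p : MvPolynomial (Fin (m + 1)) R) :
    (specializeTail φ s p).natDegree ≤ p.degreeOf 0 :=
  Polynomial.natDegree_map_le.trans_eq (natDegree_finSuccEquiv p)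

lemma degree_C_mul_specializeTail_lt (a : L) {p : MvPolynomial (Fin (m + 1)) R} {n : ℕ}
    (hp : degreeOf 0 p < n) : (Polynomial.C a * specializeTail φ s p).degree < n := by
  refine Polynomial.degree_le_natDegree.trans_lt (Nat.cast_lt.2 ?_)
  grw [Polynomial.natDegree_C_mul_le, natDegree_specializeTail_le, hp]

end Specialize

lemma natDegree_C_mul_X_pow_add_of_degree_lt {L : Type*} [Semiring L] {a : L} (ha : a ≠ 0) {n : ℕ}
    {g : Polynomial L} (hg : g.degree < n) :
    (Polynomial.C a * Polynomial.X ^ n + g).natDegree = n := by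
  rw [Polynomial.natDegree_add_eq_left_of_degree_lt, Polynomial.natDegree_C_mul_X_pow n a ha]
  rwa [Polynomial.degree_C_mul_X_pow n ha]

lemma leadingCoeff_C_mul_X_pow_add_of_degree_lt {L : Type*} [Semiring L] {a : L} (ha : a ≠ 0)
    {n : ℕ} {g : Polynomial L} (hg : g.degree < n) :
    (Polynomial.C a * Polynomial.X ^ n + g).leadingCoeff = a := by
  rw [Polynomial.leadingCoeff, natDegree_C_mul_X_pow_add_of_degree_lt ha hg]
  simp [Polynomial.coeff_eq_zero_of_degree_lt hg]

lemma finite_and_ncard_setOf_isRoot_le {L : Type*} [CommRing L] [IsDomain L] {P : Polynomial L}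
    (hP : P ≠ 0) : {b | P.IsRoot b}.Finite ∧ {b | P.IsRoot b}.ncard ≤ P.natDegree := by
  have setOf_eq : {b | P.IsRoot b} = P.rootSet L := by
    ext b
    simp [Polynomial.mem_rootSet, hP, Polynomial.IsRoot]
  rw [setOf_eq]
  exact ⟨P.rootSet_finite L, P.ncard_rootSet_le L⟩

section Valuation

variable {L Γ₀ : Type*} [CommRing L] [LinearOrderedCommGroupWithZero Γ₀] (v : Valuation L Γ₀)

lemma valuation_coeff_specializeTail_le_one {R : Type*} [CommSemiring R] {φ : R →+* L}
    (hφ : ∀ c, v (φ c) ≤ 1) {m : ℕ} {s : Fin m → L} (hs : ∀ i, v (s i) ≤ 1)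
    (p : MvPolynomial (Fin (m + 1)) R) (i : ℕ) :
    v ((specializeTail φ s p).coeff i) ≤ 1 := by
  rw [specializeTail_apply, Polynomial.coeff_map, ← v.mem_integer_iff]
  exact eval₂_mem (fun _ _ ↦ hφ _) hs

lemma valuation_lt_one_of_isRoot {P : Polynomial L} (hlead : v P.leadingCoeff = 1)
    (hcoeff : ∀ i < P.natDegree, v (P.coeff i) < 1) {b : L} (hb : P.IsRoot b) : v b < 1 := by
  by_contra! one_le
  have lead_dominates : ∀ i ∈ Finset.range (P.natDegree + 1) \ {P.natDegree},
      v (P.coeff i * b ^ i) < v (P.coeff P.natDegree * b ^ P.natDegree) := by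
    intro i hi
    have i_lt : i < P.natDegree := by grind
    calc
      v (P.coeff i * b ^ i) = v (P.coeff i) * v b ^ i := by simp
      _ < 1 * v b ^ i := by
        have pow_pos : 0 < v b ^ i := pow_pos (zero_lt_one.trans_le one_le) i
        gcongr
        exact hcoeff i i_lt
      _ ≤ 1 * v b ^ P.natDegree := by gcongr
      _ = v (P.coeff P.natDegree * b ^ P.natDegree) := by
        rw [map_mul, map_pow, Polynomial.coeff_natDegree, hlead]
  have eval_eq : v (P.eval b) = v b ^ P.natDegree := by
    rw [Polynomial.eval_eq_sum_range,
      v.map_sum_eq_of_lt (Finset.self_mem_range_succ _) lead_dominates, map_mul, map_pow,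
      Polynomial.coeff_natDegree, hlead, one_mul]
  rw [hb.eq_zero, map_zero] at eval_eq
  exact (zero_lt_one.trans_le (one_le_pow₀ one_le)).ne eval_eq

lemma valuation_lt_one_of_isRoot_C_mul_X_pow_add {a : L} (ha : v a = 1) {n : ℕ}
    {g : Polynomial L} (hdeg : g.degree < n) (hg : ∀ i < n, v (g.coeff i) < 1) {b : L}
    (hb : (Polynomial.C a * Polynomial.X ^ n + g).IsRoot b) : v b < 1 := by
  have a_ne_zero : a ≠ 0 := ne_of_apply_ne v (by simp [ha])
  refine valuation_lt_one_of_isRoot v ?_ (fun i hi ↦ ?_) hb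
  · rwa [leadingCoeff_C_mul_X_pow_add_of_degree_lt a_ne_zero hdeg]
  · rw [natDegree_C_mul_X_pow_add_of_degree_lt a_ne_zero hdeg] at hi
    simpa [Polynomial.coeff_X_pow, hi.ne] using hg i hi

end Valuation

theorem stmt_12_general {R L Γ₀ : Type*} [CommSemiring R] [CommRing L] [IsDomain L]
    [LinearOrderedCommGroupWithZero Γ₀] (v : Valuation L Γ₀) {φ : R →+* L}
    (hφ : ∀ c, v (φ c) ≤ 1) {r : R} (hr : v (φ r) = 1) {n : ℕ} {G H : MvPolynomial (Fin 2) R}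
    (hG : degreeOf 0 G < n) (hH : H = C r * X 0 ^ n + X 1 * G) {α : L} (hα : v α < 1) :
    {β | eval₂ φ ![β, α] H = 0}.Finite ∧ {β | eval₂ φ ![β, α] H = 0}.ncard ≤ n ∧
      ∀ β ∈ {β | eval₂ φ ![β, α] H = 0}, v β < 1 := by
  set g := Polynomial.C α * specializeTail φ ![α] G with g_def
  have specialize_eq :
      specializeTail φ ![α] H = Polynomial.C (φ r) * Polynomial.X ^ n + g := by
    have specialize_X_one : specializeTail φ ![α] (X 1) = Polynomial.C α :=
      specializeTail_X_succ φ ![α] 0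
    simp [hH, specialize_X_one, g_def]
  have degree_lt : g.degree < n := degree_C_mul_specializeTail_lt φ ![α] α hG
  have coeff_lt (i : ℕ) : v (g.coeff i) < 1 := by
    rw [g_def, Polynomial.coeff_C_mul, map_mul]
    exact mul_lt_one_of_lt_of_le hα
      (valuation_coeff_specializeTail_le_one v hφ (by simp [hα.le]) G i)
  have r_ne_zero : φ r ≠ 0 := ne_of_apply_ne v (by simp [hr])
  have roots_eq : {β | eval₂ φ ![β, α] H = 0} =
      {β | (Polynomial.C (φ r) * Polynomial.X ^ n + g).IsRoot β} := by
    simp only [← specialize_eq, Polynomial.IsRoot, eval_specializeTail]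
  have ne_zero : Polynomial.C (φ r) * Polynomial.X ^ n + g ≠ 0 := by
    rwa [← Polynomial.leadingCoeff_ne_zero,
      leadingCoeff_C_mul_X_pow_add_of_degree_lt r_ne_zero degree_lt]
  obtain ⟨finite, ncard_le⟩ := finite_and_ncard_setOf_isRoot_le ne_zero
  rw [natDegree_C_mul_X_pow_add_of_degree_lt r_ne_zero degree_lt] at ncard_le
  rw [roots_eq]
  exact ⟨finite, ncard_le, fun β hβ ↦
    valuation_lt_one_of_isRoot_C_mul_X_pow_add v hr degree_lt (fun i _ ↦ coeff_lt i) hβ⟩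

section Hyperreal

/-- The valuation on `ℝ*` by archimedean classes, written multiplicatively: its ring of integers
consists of the finite hyperreals and its maximal ideal of the infinitesimal ones. The order on
archimedean classes is reversed, so `hyperrealValuation x ≤ 1` unfolds to
`0 ≤ ArchimedeanClass.mk x`. -/
noncomputable def hyperrealValuation : Valuation ℝ* (Multiplicative (ArchimedeanClass ℝ*)ᵒᵈ) :=
  (ArchimedeanClass.addValuation ℝ*).toValuation

lemma hyperrealValuation_lt_one_iff_infinitesimal {x : ℝ*} :
    hyperrealValuation x < 1 ↔ Infinitesimal x :=
  infinitesimal_iff.symm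

lemma hyperrealValuation_realToHyper_le_one (c : ℝ) : hyperrealValuation (realToHyper c) ≤ 1 :=
  archimedeanClassMk_coe_nonneg c

lemma hyperrealValuation_realToHyper_eq_one {c : ℝ} (hc : c ≠ 0) :
    hyperrealValuation (realToHyper c) = 1 :=
  archimdeanClassMk_coe hc

end Hyperreal

/-- Finiteness of the root set `T_f(F)`: if `H_{F,f} = r·X^n + A·G` with
`r ≠ 0`, `n ≥ 1`, `deg_X G < n`, then for every nonzero infinitesimal `α` the set of
hyperreal roots `β` of `H_{F,f}(·,α)` is finite with at most `n` elements, and every root is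
infinitesimal. -/
theorem stmt_12 (f : Polynomial ℝ) (F : MvPolynomial (Fin 3) ℝ) (Q : MvPolynomial (Fin 2) ℝ)
    (hQ : IsDiffQuot f Q) (r : ℝ) (n : ℕ) (G : MvPolynomial (Fin 2) ℝ)
    (hr : r ≠ 0) (hn : 1 ≤ n) (hG : MvPolynomial.degreeOf 0 G < n)
    (hH : Hpoly F f Q = MvPolynomial.C r * MvPolynomial.X 0 ^ n + MvPolynomial.X 1 * G)
    (α : ℝ*) (hα0 : α ≠ 0) (hα : Infinitesimal α) :
    {β : ℝ* | MvPolynomial.eval₂ realToHyper ![β, α] (Hpoly F f Q) = 0}.Finite ∧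
    {β : ℝ* | MvPolynomial.eval₂ realToHyper ![β, α] (Hpoly F f Q) = 0}.ncard ≤ n ∧
    ∀ β ∈ {β : ℝ* | MvPolynomial.eval₂ realToHyper ![β, α] (Hpoly F f Q) = 0},
      Infinitesimal β := by
  simp only [← hyperrealValuation_lt_one_iff_infinitesimal] at hα ⊢
  exact stmt_12_general hyperrealValuation hyperrealValuation_realToHyper_le_one
    (hyperrealValuation_realToHyper_eq_one hr) hG hH hα
end
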